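/- Let m ≥ 0, let b : ℝⁿ × ℝⁿ → ℂ be smooth, compactly supported in x, and satisfy |∂_x^α ∂_ξ^β b(x,ξ)| ≤ C_{αβ} ⟨ξ⟩^{-m} for all multi-indices. Then for all h ∈ (0,1], the semiclassical quantization Op_h(b), defined by (Op_h(b) f)(x) = (2πh)^{-n} ∫∫ e^{i(x−y)·ξ/h} b(x,ξ) f(y) dy dξ, is bounded from L²(ℝⁿ) to the Sobolev space H^m(ℝⁿ) with operator norm at most C h^{-m} for a constant C independent of h. -/

import Mathlib

/-!
On the Fourier side `Oph n b h` is an integral operator: Fubini and the substitution `ξ = 2πh w` give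
`𝓕 (Oph n b h f) v = ∫ 𝓕 (b (·, 2πh w)) (v - w) * 𝓕 f w dw` (`fourier_Oph_eq`). Integrating by parts in
the compactly supported variable `x`, the kernel is at most `A ⟨v - w⟩^{-2N} ⟨2πh w⟩^{-m}` for every `N`
(`exists_fourier_slice_bound`). The Sobolev weight `⟨2πv⟩^m` is moved onto the kernel by Peetre's
inequality, which costs `⟨v - w⟩^m ⟨w⟩^m`, and `⟨2πh w⟩^{-m} ≤ h^{-m} ⟨w⟩^{-m}` cancels the second factor
(`weight_bound`). So the weighted transform is dominated by `c h^{-m}` times the convolution of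
`κ = ⟨·⟩^{m - 2N}` with `|𝓕 f|`. For `2N > n + m` the function `κ` is integrable, and Young's inequality
(`lintegral_conv_sq_le`) together with Plancherel's theorem finishes the proof.

The estimates are carried out with lower Lebesgue integrals, so no measurability or integrability of
the Fourier transform of `Oph n b h f` is needed: `‖∫ G‖ ≤ ∫⁻ ‖G‖` holds for every `G`.
-/

open MeasureTheory
open scoped RealInnerProductSpace

/-- Semiclassical quantization
`(Op_h(b) f)(x) = (2πh)^{-n} ∫∫ e^{i(x−y)·ξ/h} b(x,ξ) f(y) dy dξ`. -/
noncomputable def Oph (n : ℕ)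
    (b : EuclideanSpace ℝ (Fin n) → EuclideanSpace ℝ (Fin n) → ℂ) (h : ℝ)
    (f : EuclideanSpace ℝ (Fin n) → ℂ) : EuclideanSpace ℝ (Fin n) → ℂ :=
  fun x => ((2 * Real.pi * h) ^ n)⁻¹ •
    ∫ ξ : EuclideanSpace ℝ (Fin n),
      Complex.exp (Complex.I * ((⟪x, ξ⟫ / h : ℝ) : ℂ)) * b x ξ *
        ∫ y : EuclideanSpace ℝ (Fin n),
          Complex.exp (-Complex.I * ((⟪y, ξ⟫ / h : ℝ) : ℂ)) * f y

/-- Fourier transform `ĝ(ξ) = ∫ e^{-i x·ξ} g(x) dx`. -/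
noncomputable def fourierT (n : ℕ) (g : EuclideanSpace ℝ (Fin n) → ℂ)
    (ξ : EuclideanSpace ℝ (Fin n)) : ℂ :=
  ∫ x : EuclideanSpace ℝ (Fin n), Complex.exp (-Complex.I * ((⟪x, ξ⟫ : ℝ) : ℂ)) * g x

/-- The (non-semiclassical) Sobolev `H^m` norm, `‖g‖_{H^m} = (∫ ⟨ξ⟩^{2m} |ĝ(ξ)|² dξ)^{1/2}`. -/
noncomputable def sobolevNorm (n : ℕ) (m : ℝ) (g : EuclideanSpace ℝ (Fin n) → ℂ) : ℝ :=
  (∫ ξ : EuclideanSpace ℝ (Fin n), (1 + ‖ξ‖ ^ 2) ^ m * ‖fourierT n g ξ‖ ^ 2) ^ ((1:ℝ)/2)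

open scoped FourierTransform

/-! ### Young's inequality in `L²` -/

/-- Young's inequality `‖k ∗ u‖₂ ≤ ‖k‖₁ ‖u‖₂` for nonnegative functions (Schur's test for a convolution
kernel): Cauchy–Schwarz for the measure `k (v - w) dw`, then Tonelli. -/
lemma lintegral_conv_sq_le {n : ℕ} {k u : EuclideanSpace ℝ (Fin n) → ENNReal}
    (hk : Measurable k) (hu : Measurable u) :
    ∫⁻ v, (∫⁻ w, k (v - w) * u w) ^ 2 ≤ (∫⁻ z, k z) ^ 2 * ∫⁻ w, u w ^ 2 := by
  have hcs : ∀ v, (∫⁻ w, k (v - w) * u w) ^ 2 ≤ (∫⁻ z, k z) * ∫⁻ w, k (v - w) * u w ^ 2 := by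
    intro v
    have hkv : Measurable fun w => k (v - w) := by fun_prop
    -- split `k u = k^{1/2} · (k^{1/2} u)`
    have h1 := ENNReal.lintegral_mul_le_Lp_mul_Lq volume Real.HolderConjugate.two_two
      (f := fun w => k (v - w) ^ (1 / 2 : ℝ)) (g := fun w => k (v - w) ^ (1 / 2 : ℝ) * u w)
      (by fun_prop) (by fun_prop)
    have e1 : ∀ x : ENNReal, x ^ (1 / 2 : ℝ) * x ^ (1 / 2 : ℝ) = x := by
      intro x
      rw [← ENNReal.rpow_add_of_nonneg _ _ (by norm_num) (by norm_num)]; norm_num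
    have e2 : ∀ x : ENNReal, (x ^ (1 / 2 : ℝ)) ^ 2 = x := by
      intro x; rw [pow_two, e1]
    simp only [Pi.mul_apply, ENNReal.rpow_two, mul_pow, e2, ← mul_assoc, e1] at h1
    rw [lintegral_sub_left_eq_self] at h1
    calc (∫⁻ w, k (v - w) * u w) ^ 2 ≤ _ := pow_le_pow_left' h1 2
      _ = _ := by rw [mul_pow, e2, e2]
  calc ∫⁻ v, (∫⁻ w, k (v - w) * u w) ^ 2
      ≤ ∫⁻ v, (∫⁻ z, k z) * ∫⁻ w, k (v - w) * u w ^ 2 := lintegral_mono hcs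
    _ = (∫⁻ z, k z) * ∫⁻ v, ∫⁻ w, k (v - w) * u w ^ 2 := by
        rw [lintegral_const_mul]
        apply Measurable.lintegral_prod_right'
          (f := fun p : EuclideanSpace ℝ (Fin n) × EuclideanSpace ℝ (Fin n) =>
            k (p.1 - p.2) * u p.2 ^ 2)
        fun_prop
    _ = (∫⁻ z, k z) * ∫⁻ w, ∫⁻ v, k (v - w) * u w ^ 2 := by
        rw [lintegral_lintegral_swap]
        fun_prop
    _ = (∫⁻ z, k z) * ∫⁻ w, (∫⁻ z, k z) * u w ^ 2 := by
        congr 1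
        refine lintegral_congr fun w => ?_
        rw [lintegral_mul_const _ (by fun_prop), lintegral_sub_right_eq_self]
    _ = _ := by rw [lintegral_const_mul _ (by fun_prop), pow_two, mul_assoc]

/-! ### Decay of the Fourier transform of the symbol -/

/-- The `x`-derivatives of a symbol are controlled by its full derivatives, since `x ↦ b x ξ` is the
symbol composed with the affine map `x ↦ (x, 0) + (0, ξ)`, whose linear part has norm at most `1`. -/
lemma norm_iteratedFDeriv_slice_le {n : ℕ}
    {b : EuclideanSpace ℝ (Fin n) → EuclideanSpace ℝ (Fin n) → ℂ}
    (hsm : ContDiff ℝ (⊤ : ℕ∞) (fun p : EuclideanSpace ℝ (Fin n) × EuclideanSpace ℝ (Fin n) =>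
      b p.1 p.2)) (k : ℕ) (x ξ : EuclideanSpace ℝ (Fin n)) :
    ‖iteratedFDeriv ℝ k (fun x => b x ξ) x‖ ≤ ‖iteratedFDeriv ℝ k
        (fun p : EuclideanSpace ℝ (Fin n) × EuclideanSpace ℝ (Fin n) => b p.1 p.2) (x, ξ)‖ := by
  set B := fun p : EuclideanSpace ℝ (Fin n) × EuclideanSpace ℝ (Fin n) => b p.1 p.2 with hB
  have hT : ContDiff ℝ (⊤ : ℕ∞) (fun p => B (p + (0, ξ))) := by fun_prop
  have e : (fun x => b x ξ) = (fun p => B (p + (0, ξ))) ∘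
      (ContinuousLinearMap.inl ℝ (EuclideanSpace ℝ (Fin n)) (EuclideanSpace ℝ (Fin n))) := by
    ext x; simp [hB]
  rw [e, ContinuousLinearMap.iteratedFDeriv_comp_right _ hT x (by exact_mod_cast le_top),
    iteratedFDeriv_comp_add_right]
  refine (ContinuousMultilinearMap.norm_compContinuousLinearMap_le _ _).trans ?_
  have : ‖ContinuousLinearMap.inl ℝ (EuclideanSpace ℝ (Fin n)) (EuclideanSpace ℝ (Fin n))‖ ≤ 1 :=
    ContinuousLinearMap.norm_inl_le_one ..
  simp only [Finset.prod_const, Finset.card_univ, Fintype.card_fin, ContinuousLinearMap.inl_apply,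
    Prod.mk_add_mk, add_zero, zero_add]
  exact mul_le_of_le_one_right (norm_nonneg _) (pow_le_one₀ (norm_nonneg _) this)

/-- Kernel estimate: the Fourier transform of `b` in `x` decays faster than any power, uniformly with
the weight `⟨ξ⟩^{-m}`. It comes from integration by parts in `x` over the compact support. -/
lemma exists_fourier_slice_bound {n : ℕ} {m : ℝ}
    {b : EuclideanSpace ℝ (Fin n) → EuclideanSpace ℝ (Fin n) → ℂ}
    (hsm : ContDiff ℝ (⊤ : ℕ∞) (fun p : EuclideanSpace ℝ (Fin n) × EuclideanSpace ℝ (Fin n) =>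
      b p.1 p.2))
    (hsupp : ∃ K : Set (EuclideanSpace ℝ (Fin n)), IsCompact K ∧
      ∀ x, x ∉ K → ∀ ξ, b x ξ = 0)
    (hsym : ∀ k : ℕ, ∃ Ck : ℝ, ∀ x ξ : EuclideanSpace ℝ (Fin n),
      ‖iteratedFDeriv ℝ k
        (fun p : EuclideanSpace ℝ (Fin n) × EuclideanSpace ℝ (Fin n) => b p.1 p.2)
        (x, ξ)‖ ≤ Ck * (1 + ‖ξ‖ ^ 2) ^ (-(m/2))) (N : ℕ) :
    ∃ A : ℝ, 0 ≤ A ∧ ∀ z ξ : EuclideanSpace ℝ (Fin n),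
      (1 + ‖z‖ ^ 2) ^ N * ‖𝓕 (fun x => b x ξ) z‖ ≤ A * (1 + ‖ξ‖ ^ 2) ^ (-(m/2)) := by
  obtain ⟨K, hK, hbK⟩ := hsupp
  choose Ck hCk using hsym
  have hsl : ∀ ξ, ContDiff ℝ (⊤ : ℕ∞) (fun x => b x ξ) := fun ξ =>
    hsm.comp (contDiff_id.prodMk contDiff_const)
  have hcs : ∀ ξ, HasCompactSupport (fun x => b x ξ) := fun ξ =>
    HasCompactSupport.intro hK fun x hx => hbK x hx ξ
  have hint : ∀ ξ (k j : ℕ),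
      Integrable (fun v => ‖v‖ ^ k * ‖iteratedFDeriv ℝ j (fun x => b x ξ) v‖) := by
    intro ξ k j
    apply Continuous.integrable_of_hasCompactSupport
    · have := (hsl ξ).continuous_iteratedFDeriv (m := j) (by exact_mod_cast le_top)
      fun_prop
    · exact ((hcs ξ).iteratedFDeriv j).norm.mul_left
  -- every `x`-derivative vanishes off `K`, so its `L¹` norm is at most its sup norm times `|K|`
  have hL1 : ∀ ξ (j : ℕ), ∫ v, ‖iteratedFDeriv ℝ j (fun x => b x ξ) v‖ ≤
      volume.real K * Ck j * (1 + ‖ξ‖ ^ 2) ^ (-(m/2)) := by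
    intro ξ j
    rw [← setIntegral_eq_integral_of_forall_compl_eq_zero (s := K)]
    · calc _ ≤ ∫ v in K, Ck j * (1 + ‖ξ‖ ^ 2) ^ (-(m/2)) := by
            apply setIntegral_mono_on
            · simpa using (hint ξ 0 j).integrableOn
            · exact integrableOn_const hK.measure_lt_top.ne
            · exact hK.measurableSet
            · exact fun x _ => (norm_iteratedFDeriv_slice_le hsm j x ξ).trans (hCk j x ξ)
        _ = _ := by rw [setIntegral_const, smul_eq_mul, mul_assoc]
    · intro x hx
      have hsub : Function.support (iteratedFDeriv ℝ j fun x => b x ξ) ⊆ K := by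
        refine (support_iteratedFDeriv_subset j).trans ?_
        refine closure_minimal (fun y hy => ?_) hK.isClosed
        by_contra hyK
        exact hy (hbK y hyK ξ)
      rw [norm_eq_zero]
      by_contra h0
      exact hx (hsub h0)
  have hpow : ∀ j : ℕ, ∃ A : ℝ, ∀ z ξ : EuclideanSpace ℝ (Fin n),
      ‖z‖ ^ j * ‖𝓕 (fun x => b x ξ) z‖ ≤ A * (1 + ‖ξ‖ ^ 2) ^ (-(m/2)) := by
    intro j
    refine ⟨2 ^ j * ∑ i ∈ Finset.range (j + 1), volume.real K * Ck i, fun z ξ => ?_⟩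
    have := Real.pow_mul_norm_iteratedFDeriv_fourier_le (K := ⊤) (N := ⊤) (hsl ξ)
      (fun k i _ _ => hint ξ k i) (k := 0) (n := j) le_top le_top z
    simp only [norm_iteratedFDeriv_zero, zero_add, Finset.range_one, Finset.singleton_product,
      Finset.sum_map, Function.Embedding.coeFn_mk, pow_zero, one_mul, Nat.cast_zero,
      mul_zero] at this
    refine this.trans ?_
    rw [mul_assoc, Finset.sum_mul]
    gcongr with i _
    exact hL1 ξ i
  obtain ⟨A₀, hA₀⟩ := hpow 0
  obtain ⟨A₁, hA₁⟩ := hpow (2 * N)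
  have key : ∀ z ξ : EuclideanSpace ℝ (Fin n), (1 + ‖z‖ ^ 2) ^ N * ‖𝓕 (fun x => b x ξ) z‖ ≤
      (2 ^ N * (A₀ + A₁)) * (1 + ‖ξ‖ ^ 2) ^ (-(m/2)) := by
    intro z ξ
    have h2 : (1 + ‖z‖ ^ 2) ^ N ≤ 2 ^ N * (1 + ‖z‖ ^ (2 * N)) := by
      have := add_pow_le (zero_le_one (α := ℝ)) (sq_nonneg ‖z‖) N
      rw [one_pow, ← pow_mul] at this
      refine this.trans ?_
      gcongr
      · norm_num
      · omega
    calc _ ≤ 2 ^ N * (1 + ‖z‖ ^ (2 * N)) * ‖𝓕 (fun x => b x ξ) z‖ := by gcongr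
      _ = 2 ^ N * (‖z‖ ^ 0 * ‖𝓕 (fun x => b x ξ) z‖
            + ‖z‖ ^ (2 * N) * ‖𝓕 (fun x => b x ξ) z‖) := by ring
      _ ≤ 2 ^ N * (A₀ * (1 + ‖ξ‖ ^ 2) ^ (-(m/2)) + A₁ * (1 + ‖ξ‖ ^ 2) ^ (-(m/2))) := by
          exact mul_le_mul_of_nonneg_left (add_le_add (hA₀ z ξ) (hA₁ z ξ)) (by positivity)
      _ = _ := by ring
  refine ⟨2 ^ N * (A₀ + A₁), ?_, key⟩
  have := (by positivity : 0 ≤ (1 + ‖(0 : EuclideanSpace ℝ (Fin n))‖ ^ 2) ^ N *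
    ‖𝓕 (fun x => b x 0) (0 : EuclideanSpace ℝ (Fin n))‖).trans (key 0 0)
  simpa using this

/-! ### The operator on the Fourier side -/

lemma fourierT_two_pi_smul {n : ℕ} (g : EuclideanSpace ℝ (Fin n) → ℂ)
    (v : EuclideanSpace ℝ (Fin n)) : fourierT n g ((2 * Real.pi) • v) = 𝓕 g v := by
  rw [Real.fourier_eq', fourierT]
  congr 1 with x
  rw [smul_eq_mul, real_inner_smul_right]
  congr 2
  push_cast; ring

/-- The change of variables `ξ = 2πh w` absorbs the prefactor `(2πh)^{-n}`, turning `Oph` into the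
classical quantization of `b (x, 2πh w)` in the `exp (2πi ⟨x, w⟩)` normalization. -/
lemma Oph_eq {n : ℕ} (b : EuclideanSpace ℝ (Fin n) → EuclideanSpace ℝ (Fin n) → ℂ) {h : ℝ}
    (h0 : 0 < h) (f : EuclideanSpace ℝ (Fin n) → ℂ) (x : EuclideanSpace ℝ (Fin n)) :
    Oph n b h f x = ∫ w, Complex.exp (((2 * Real.pi * ⟪x, w⟫ : ℝ) : ℂ) * Complex.I) *
      b x ((2 * Real.pi * h) • w) * 𝓕 f w := by
  have hc : 0 < 2 * Real.pi * h := by positivity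
  have := Measure.integral_comp_smul_of_nonneg volume (fun ξ : EuclideanSpace ℝ (Fin n) =>
      Complex.exp (Complex.I * ((⟪x, ξ⟫ / h : ℝ) : ℂ)) * b x ξ *
        ∫ y : EuclideanSpace ℝ (Fin n),
          Complex.exp (-Complex.I * ((⟪y, ξ⟫ / h : ℝ) : ℂ)) * f y) (2 * Real.pi * h)
          (hR := hc.le)
  rw [finrank_euclideanSpace_fin] at this
  rw [Oph, ← this]
  congr 1 with w
  rw [Real.fourier_eq', real_inner_smul_right]
  have hh : (h : ℂ) ≠ 0 := by exact_mod_cast h0.ne'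
  congr 2
  · congr 1
    push_cast
    field_simp
  · ext y
    rw [smul_eq_mul, real_inner_smul_right]
    congr 2
    push_cast
    field_simp

/-- By Fubini, `Oph` acts on the Fourier side by the integral kernel `b̂(v - w, 2πh w)`. -/
lemma fourier_Oph_eq {n : ℕ} {m : ℝ} (hm : 0 ≤ m)
    {b : EuclideanSpace ℝ (Fin n) → EuclideanSpace ℝ (Fin n) → ℂ}
    (hsm : ContDiff ℝ (⊤ : ℕ∞) (fun p : EuclideanSpace ℝ (Fin n) × EuclideanSpace ℝ (Fin n) =>
      b p.1 p.2))
    (hsupp : ∃ K : Set (EuclideanSpace ℝ (Fin n)), IsCompact K ∧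
      ∀ x, x ∉ K → ∀ ξ, b x ξ = 0)
    (hbd : ∃ C : ℝ, ∀ x ξ : EuclideanSpace ℝ (Fin n),
      ‖b x ξ‖ ≤ C * (1 + ‖ξ‖ ^ 2) ^ (-(m/2)))
    {h : ℝ} (h0 : 0 < h) (f : SchwartzMap (EuclideanSpace ℝ (Fin n)) ℂ)
    (v : EuclideanSpace ℝ (Fin n)) :
    𝓕 (Oph n b h f) v =
      ∫ w, 𝓕 (fun x => b x ((2 * Real.pi * h) • w)) (v - w) * 𝓕 (f : _ → ℂ) w := by
  obtain ⟨K, hK, hbK⟩ := hsupp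
  obtain ⟨C, hC⟩ := hbd
  have hbc : Continuous (fun p : EuclideanSpace ℝ (Fin n) × EuclideanSpace ℝ (Fin n) =>
      b p.1 p.2) := hsm.continuous
  have hFf : Continuous (𝓕 (f : _ → ℂ)) := by
    rw [← SchwartzMap.fourier_coe]; exact (𝓕 f).continuous
  have hFi : Integrable (𝓕 (f : _ → ℂ)) := by
    rw [← SchwartzMap.fourier_coe]; exact (𝓕 f).integrable
  have hC1 : ∀ x ξ, ‖b x ξ‖ ≤ |C| := by
    intro x ξ
    refine (hC x ξ).trans ?_
    have h1 : (1 + ‖ξ‖ ^ 2) ^ (-(m/2)) ≤ 1 :=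
      Real.rpow_le_one_of_one_le_of_nonpos (by nlinarith [sq_nonneg ‖ξ‖]) (by linarith)
    calc _ ≤ |C| * 1 := by gcongr; exact le_abs_self C
      _ = _ := mul_one _
  set F : EuclideanSpace ℝ (Fin n) → EuclideanSpace ℝ (Fin n) → ℂ := fun x w =>
    Complex.exp (((-2 * Real.pi * ⟪x, v⟫ : ℝ) : ℂ) * Complex.I) *
      (Complex.exp (((2 * Real.pi * ⟪x, w⟫ : ℝ) : ℂ) * Complex.I) *
      b x ((2 * Real.pi * h) • w) * 𝓕 (f : _ → ℂ) w) with hF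
  have hbc' : Continuous (fun p : EuclideanSpace ℝ (Fin n) × EuclideanSpace ℝ (Fin n) =>
      b p.1 ((2 * Real.pi * h) • p.2)) :=
    hbc.comp (by fun_prop : Continuous fun p : EuclideanSpace ℝ (Fin n) ×
      EuclideanSpace ℝ (Fin n) => (p.1, (2 * Real.pi * h) • p.2))
  have hFint : Integrable (Function.uncurry F) (volume.prod volume) := by
    have hdom : Integrable (fun p : EuclideanSpace ℝ (Fin n) × EuclideanSpace ℝ (Fin n) =>
        K.indicator (fun _ => |C|) p.1 * ‖𝓕 (f : _ → ℂ) p.2‖) (volume.prod volume) := by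
      apply Integrable.mul_prod _ hFi.norm
      rw [integrable_indicator_iff hK.measurableSet]
      exact integrableOn_const hK.measure_lt_top.ne
    refine hdom.mono' (Continuous.aestronglyMeasurable ?_) (Filter.Eventually.of_forall ?_)
    · simp only [hF, Function.uncurry_def]
      fun_prop
    · rintro ⟨x, w⟩
      simp only [hF, Function.uncurry_apply_pair, norm_mul, Complex.norm_exp_ofReal_mul_I, one_mul]
      gcongr
      by_cases hx : x ∈ K
      · simpa [hx] using hC1 x _
      · simp [hx, hbK x hx]
  rw [Real.fourier_eq']
  calc _ = ∫ x, ∫ w, F x w := by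
        congr 1 with x
        rw [Oph_eq b h0, smul_eq_mul, ← integral_const_mul]
    _ = ∫ w, ∫ x, F x w := integral_integral_swap hFint
    _ = _ := by
        congr 1 with w
        rw [Real.fourier_eq', ← integral_mul_const]
        congr 1 with x
        simp only [hF, smul_eq_mul, inner_sub_right]
        rw [← mul_assoc, ← mul_assoc, ← Complex.exp_add]
        congr 3
        push_cast; ring

/-! ### Weights -/

/-- Peetre's inequality `⟨v⟩^m ≤ 2^{m/2} ⟨v - w⟩^m ⟨w⟩^m`, combined with `⟨hw⟩^{-m} ≤ h^{-m} ⟨w⟩^{-m}`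
for `h ≤ 1`; the factors `⟨w⟩^{±m}` cancel. -/
lemma weight_bound {n : ℕ} {m : ℝ} (hm : 0 ≤ m) {h : ℝ} (h0 : 0 < h) (h1 : h ≤ 1)
    (v w : EuclideanSpace ℝ (Fin n)) :
    (1 + ‖(2 * Real.pi) • v‖ ^ 2) ^ (m/2) * (1 + ‖(2 * Real.pi * h) • w‖ ^ 2) ^ (-(m/2)) ≤
      (2 * (2 * Real.pi) ^ 2) ^ (m/2) * h ^ (-m) * (1 + ‖v - w‖ ^ 2) ^ (m/2) := by
  have hpi : 1 ≤ 2 * Real.pi := by linarith [Real.pi_gt_three]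
  have hpi2 : 1 ≤ (2 * Real.pi) ^ 2 := one_le_pow₀ hpi
  have hhm : h ^ (-m) = (h ^ 2) ^ (-(m/2)) := by
    rw [← Real.rpow_natCast, ← Real.rpow_mul h0.le]; congr 1; push_cast; ring
  have a1 : 1 + ‖(2 * Real.pi) • v‖ ^ 2 ≤
      2 * (2 * Real.pi) ^ 2 * ((1 + ‖v - w‖ ^ 2) * (1 + ‖w‖ ^ 2)) := by
    rw [norm_smul, mul_pow, Real.norm_of_nonneg (by positivity)]
    have t : ‖v‖ ≤ ‖v - w‖ + ‖w‖ := by simpa using norm_add_le (v - w) w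
    have t2 : ‖v‖ ^ 2 ≤ 2 * (‖v - w‖ ^ 2 + ‖w‖ ^ 2) := by
      nlinarith [sq_nonneg (‖v - w‖ - ‖w‖), norm_nonneg v]
    have t3 : 1 + ‖v‖ ^ 2 ≤ 2 * ((1 + ‖v - w‖ ^ 2) * (1 + ‖w‖ ^ 2)) := by
      nlinarith [mul_nonneg (sq_nonneg ‖v - w‖) (sq_nonneg ‖w‖)]
    calc _ ≤ (2 * Real.pi) ^ 2 * (1 + ‖v‖ ^ 2) := by nlinarith
      _ ≤ (2 * Real.pi) ^ 2 * (2 * ((1 + ‖v - w‖ ^ 2) * (1 + ‖w‖ ^ 2))) := by gcongr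
      _ = _ := by ring
  have a2 : h ^ 2 * (1 + ‖w‖ ^ 2) ≤ 1 + ‖(2 * Real.pi * h) • w‖ ^ 2 := by
    rw [norm_smul, mul_pow, Real.norm_of_nonneg (by positivity), mul_pow]
    have : h ^ 2 ≤ 1 := pow_le_one₀ h0.le h1
    nlinarith [mul_nonneg (sq_nonneg h) (sq_nonneg ‖w‖)]
  have b1 := Real.rpow_le_rpow (by positivity) a1 (by positivity : 0 ≤ m / 2)
  have b2 := Real.rpow_le_rpow_of_nonpos (by positivity) a2 (by linarith : -(m / 2) ≤ 0)
  calc _ ≤ _ := mul_le_mul b1 b2 (by positivity) (by positivity)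
    _ = (2 * (2 * Real.pi) ^ 2) ^ (m/2) * h ^ (-m) * (1 + ‖v - w‖ ^ 2) ^ (m/2) *
        ((1 + ‖w‖ ^ 2) ^ (m/2) * (1 + ‖w‖ ^ 2) ^ (-(m/2))) := by
        rw [Real.mul_rpow (by positivity) (by positivity),
          Real.mul_rpow (x := 1 + ‖v - w‖ ^ 2) (by positivity) (by positivity),
          Real.mul_rpow (x := h ^ 2) (by positivity) (by positivity), hhm]
        ring
    _ = _ := by
        rw [← Real.rpow_add (by positivity), add_neg_cancel, Real.rpow_zero, mul_one]

/-! ### Boundedness from `L²` to `H^m` -/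

/-- Let `m ≥ 0` and let `b(x,ξ)` be smooth, compactly supported in `x`, with all
derivatives bounded by `C ⟨ξ⟩^{-m}`.  Then for all `h ∈ (0,1]` the semiclassical
quantization `Op_h(b)` is bounded from `L²(ℝⁿ)` to `H^m(ℝⁿ)` with operator norm at
most `C h^{-m}`, `C` independent of `h`. -/
theorem oph_l2_to_sobolev_bound (n : ℕ) (m : ℝ) (hm : 0 ≤ m)
    (b : EuclideanSpace ℝ (Fin n) → EuclideanSpace ℝ (Fin n) → ℂ)
    (hsm : ContDiff ℝ (⊤ : ℕ∞) (fun p : EuclideanSpace ℝ (Fin n) × EuclideanSpace ℝ (Fin n) =>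
      b p.1 p.2))
    (hsupp : ∃ K : Set (EuclideanSpace ℝ (Fin n)), IsCompact K ∧
      ∀ x, x ∉ K → ∀ ξ, b x ξ = 0)
    (hsym : ∀ k : ℕ, ∃ Ck : ℝ, ∀ x ξ : EuclideanSpace ℝ (Fin n),
      ‖iteratedFDeriv ℝ k
        (fun p : EuclideanSpace ℝ (Fin n) × EuclideanSpace ℝ (Fin n) => b p.1 p.2)
        (x, ξ)‖ ≤ Ck * (1 + ‖ξ‖ ^ 2) ^ (-(m/2))) :
    ∃ C : ℝ, ∀ h : ℝ, 0 < h → h ≤ 1 →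
      ∀ f : SchwartzMap (EuclideanSpace ℝ (Fin n)) ℂ,
        sobolevNorm n m (Oph n b h ⇑f)
          ≤ C * h ^ (-m) * (∫ x : EuclideanSpace ℝ (Fin n), ‖f x‖ ^ 2) ^ ((1:ℝ)/2) := by
  -- `2N > n + m` makes `κ` below integrable
  obtain ⟨N, hN⟩ := exists_nat_gt ((n + m) / 2)
  obtain ⟨A, hA0, hA⟩ := exists_fourier_slice_bound hsm hsupp hsym N
  have hbd : ∃ C : ℝ, ∀ x ξ : EuclideanSpace ℝ (Fin n),
      ‖b x ξ‖ ≤ C * (1 + ‖ξ‖ ^ 2) ^ (-(m/2)) := by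
    obtain ⟨C, hC⟩ := hsym 0
    exact ⟨C, fun x ξ => by simpa using hC x ξ⟩
  set κ : EuclideanSpace ℝ (Fin n) → ℝ := fun z => (1 + ‖z‖ ^ 2) ^ (-(2 * N - m) / 2) with hκ
  have hκ0 : ∀ z, 0 ≤ κ z := fun z => by positivity
  have hκi : Integrable κ := by
    apply integrable_rpow_neg_one_add_norm_sq
    rw [finrank_euclideanSpace_fin]
    linarith
  set c : ℝ := (2 * (2 * Real.pi) ^ 2) ^ (m/2) * A with hc
  have hc0 : 0 ≤ c := by positivity
  set I : ℝ := ∫ z, κ z with hI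
  have hI0 : 0 ≤ I := integral_nonneg hκ0
  refine ⟨((2 * Real.pi) ^ n) ^ ((1:ℝ)/2) * (c * I), fun h h0 h1 f => ?_⟩
  set u : EuclideanSpace ℝ (Fin n) → ℂ := 𝓕 (f : _ → ℂ) with hu
  have huc : Continuous u := by
    rw [hu, ← SchwartzMap.fourier_coe]; exact (𝓕 f).continuous
  set S : ℝ := ∫ x, ‖f x‖ ^ 2 with hS
  have hS0 : 0 ≤ S := integral_nonneg fun x => by positivity
  have hhm : 0 < h ^ (-m) := by positivity
  -- Plancherel
  have hu2 : ∫⁻ w, ‖u w‖ₑ ^ 2 = ENNReal.ofReal S := by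
    rw [hS, ← SchwartzMap.integral_norm_sq_fourier f, SchwartzMap.fourier_coe,
      ofReal_integral_eq_lintegral_ofReal]
    · refine lintegral_congr fun w => ?_
      rw [ENNReal.ofReal_pow (norm_nonneg _), ofReal_norm]
    · rw [← SchwartzMap.fourier_coe]
      exact ((𝓕 f).memLp 2).integrable_norm_pow (by norm_num)
    · exact Filter.Eventually.of_forall fun w => by positivity
  have hκe : ∫⁻ z, ENNReal.ofReal (κ z) = ENNReal.ofReal I := by
    rw [hI, ofReal_integral_eq_lintegral_ofReal hκi (Filter.Eventually.of_forall hκ0)]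
  -- pointwise kernel bound: the weighted transform is dominated by the convolution `κ ∗ |f̂|`
  have hpt : ∀ v, ‖(1 + ‖(2 * Real.pi) • v‖ ^ 2) ^ (m/2) * ‖𝓕 (Oph n b h f) v‖‖ₑ ≤
      ENNReal.ofReal (c * h ^ (-m)) * ∫⁻ w, ENNReal.ofReal (κ (v - w)) * ‖u w‖ₑ := by
    intro v
    rw [enorm_mul, enorm_norm, fourier_Oph_eq hm hsm hsupp hbd h0 f v]
    refine (mul_le_mul_right (enorm_integral_le_lintegral_enorm _) _).trans ?_
    rw [← lintegral_const_mul' _ _ enorm_ne_top, ← lintegral_const_mul' _ _ ENNReal.ofReal_ne_top]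
    refine lintegral_mono fun w => ?_
    rw [enorm_mul, ← mul_assoc, ← mul_assoc]
    refine mul_le_mul_left ?_ _
    rw [← ENNReal.ofReal_mul (by positivity), ← ofReal_norm, ← ofReal_norm,
      ← ENNReal.ofReal_mul (by positivity), Real.norm_of_nonneg (by positivity)]
    refine ENNReal.ofReal_le_ofReal ?_
    have hp : 0 < (1 + ‖v - w‖ ^ 2) ^ N := by positivity
    have hk : κ (v - w) = (1 + ‖v - w‖ ^ 2) ^ (m/2) / (1 + ‖v - w‖ ^ 2) ^ N := by
      rw [← Real.rpow_natCast (1 + ‖v - w‖ ^ 2) N, ← Real.rpow_sub (by positivity), hκ]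
      dsimp only
      congr 1; ring
    have hb := hA (v - w) ((2 * Real.pi * h) • w)
    rw [hk, ← mul_div_assoc, le_div_iff₀ hp]
    calc _ = (1 + ‖(2 * Real.pi) • v‖ ^ 2) ^ (m/2) * ((1 + ‖v - w‖ ^ 2) ^ N *
            ‖𝓕 (fun x => b x ((2 * Real.pi * h) • w)) (v - w)‖) := by ring
      _ ≤ (1 + ‖(2 * Real.pi) • v‖ ^ 2) ^ (m/2) *
            (A * (1 + ‖(2 * Real.pi * h) • w‖ ^ 2) ^ (-(m/2))) := by gcongr
      _ = A * ((1 + ‖(2 * Real.pi) • v‖ ^ 2) ^ (m/2) *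
            (1 + ‖(2 * Real.pi * h) • w‖ ^ 2) ^ (-(m/2))) := by ring
      _ ≤ A * ((2 * (2 * Real.pi) ^ 2) ^ (m/2) * h ^ (-m) * (1 + ‖v - w‖ ^ 2) ^ (m/2)) := by
          gcongr A * ?_
          exact weight_bound hm h0 h1 v w
      _ = _ := by rw [hc]; ring
  set G : EuclideanSpace ℝ (Fin n) → ℝ := fun ζ =>
    (1 + ‖ζ‖ ^ 2) ^ m * ‖fourierT n (Oph n b h f) ζ‖ ^ 2 with hG
  have hGv : ∀ v, G ((2 * Real.pi) • v) =
      ((1 + ‖(2 * Real.pi) • v‖ ^ 2) ^ (m/2) * ‖𝓕 (Oph n b h f) v‖) ^ 2 := by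
    intro v
    have hw : ((1 + ‖(2 * Real.pi) • v‖ ^ 2) ^ (m/2)) ^ 2 = (1 + ‖(2 * Real.pi) • v‖ ^ 2) ^ m := by
      rw [← Real.rpow_natCast (_ ^ (m/2)), ← Real.rpow_mul (by positivity)]
      congr 1; push_cast; ring
    rw [hG, mul_pow, hw, ← fourierT_two_pi_smul]
  have hGle : ∫ v, G ((2 * Real.pi) • v) ≤ (c * h ^ (-m)) ^ 2 * (I ^ 2 * S) := by
    rw [← ENNReal.ofReal_le_ofReal_iff (by positivity)]
    calc ENNReal.ofReal (∫ v, G ((2 * Real.pi) • v)) ≤ ‖∫ v, G ((2 * Real.pi) • v)‖ₑ := by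
          rw [← ofReal_norm]; exact ENNReal.ofReal_le_ofReal (Real.le_norm_self _)
      _ ≤ ∫⁻ v, ‖G ((2 * Real.pi) • v)‖ₑ := enorm_integral_le_lintegral_enorm _
      _ ≤ ∫⁻ v, (ENNReal.ofReal (c * h ^ (-m)) ^ 2 *
            (∫⁻ w, ENNReal.ofReal (κ (v - w)) * ‖u w‖ₑ) ^ 2) := by
          refine lintegral_mono fun v => ?_
          rw [hGv, enorm_pow, ← mul_pow]
          exact pow_le_pow_left' (hpt v) 2
      _ = ENNReal.ofReal (c * h ^ (-m)) ^ 2 *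
            ∫⁻ v, (∫⁻ w, ENNReal.ofReal (κ (v - w)) * ‖u w‖ₑ) ^ 2 :=
          lintegral_const_mul' _ _ (by finiteness)
      _ ≤ ENNReal.ofReal (c * h ^ (-m)) ^ 2 *
            ((∫⁻ z, ENNReal.ofReal (κ z)) ^ 2 * ∫⁻ w, ‖u w‖ₑ ^ 2) := by
          gcongr
          exact lintegral_conv_sq_le (k := fun z => ENNReal.ofReal (κ z)) (u := fun w => ‖u w‖ₑ)
            (by rw [hκ]; fun_prop) huc.measurable.enorm
      _ = _ := by
          rw [hκe, hu2, ← ENNReal.ofReal_pow (by positivity), ← ENNReal.ofReal_pow hI0,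
            ← ENNReal.ofReal_mul (by positivity), ← ENNReal.ofReal_mul (by positivity)]
  have hGint : ∫ ζ, G ζ = (2 * Real.pi) ^ n * ∫ v, G ((2 * Real.pi) • v) := by
    rw [Measure.integral_comp_smul_of_nonneg volume G (2 * Real.pi) (hR := by positivity),
      finrank_euclideanSpace_fin, smul_eq_mul, mul_inv_cancel_left₀ (by positivity)]
  calc sobolevNorm n m (Oph n b h f) = (∫ ζ, G ζ) ^ ((1:ℝ)/2) := rfl
    _ ≤ ((2 * Real.pi) ^ n * ((c * h ^ (-m)) ^ 2 * (I ^ 2 * S))) ^ ((1:ℝ)/2) := by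
        refine Real.rpow_le_rpow (integral_nonneg fun ζ => by positivity) ?_ (by norm_num)
        rw [hGint]
        gcongr
    _ = ((2 * Real.pi) ^ n) ^ ((1:ℝ)/2) * ((c * h ^ (-m) * I) ^ 2) ^ ((1:ℝ)/2) *
          S ^ ((1:ℝ)/2) := by
        rw [← Real.mul_rpow (by positivity) (by positivity),
          ← Real.mul_rpow (by positivity) hS0]
        congr 1; ring
    _ = _ := by
        have : ((c * h ^ (-m) * I) ^ 2) ^ ((1:ℝ)/2) = c * h ^ (-m) * I := by
          rw [← Real.sqrt_eq_rpow, Real.sqrt_sq (by positivity)]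
        rw [this]; ring
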